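/- If D is a digraph such that the incidence poset P(D) has a unique maximal element and w(P(D)) ≥ 2, then the catch leafage equals the width: l*(D) = w(P(D)). -/

import Mathlib

/-- A subtree representation of a digraph with edge relation `E` on vertex type `V`
in a host graph `T` on vertex type `W`: each digraph vertex `v` gets a source set
`src v` and a sink set `snk v`, each inducing a connected (hence nonempty) subgraph
of `T`, such that `E u v` holds iff `src u` meets `snk v`. -/
structure SubtreeRep {V W : Type} (E : V → V → Prop) (T : SimpleGraph W) where
  src : V → Set W
  snk : V → Set W
  src_connected : ∀ v, (T.induce (src v)).Connected
  snk_connected : ∀ v, (T.induce (snk v)).Connected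
  rep : ∀ u v, E u v ↔ (src u ∩ snk v).Nonempty

/-- The set of leaves (vertices of degree 1) of a graph. -/
def treeLeaves {W : Type} (T : SimpleGraph W) : Set W :=
  {w | (T.neighborSet w).ncard = 1}

/-- The leafage of a digraph: the minimum number of leaves of a finite host tree in
which the digraph has a subtree representation. -/
noncomputable def digLeafage {V : Type} (E : V → V → Prop) : ℕ :=
  sInf {k | ∃ (W : Type) (_ : Fintype W) (T : SimpleGraph W),
    T.IsTree ∧ Nonempty (SubtreeRep E T) ∧ (treeLeaves T).ncard = k}

/-- The catch leafage of a digraph: the minimum number of leaves of a finite host tree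
in which the digraph has a subtree representation all of whose sink sets are single
vertices. -/
noncomputable def catchLeafage {V : Type} (E : V → V → Prop) : ℕ :=
  sInf {k | ∃ (W : Type) (_ : Fintype W) (T : SimpleGraph W) (R : SubtreeRep E T),
    T.IsTree ∧ (∀ v, ∃ x, R.snk v = {x}) ∧ (treeLeaves T).ncard = k}

/-- `C` is between `A` and `B` in `T`: `A` and `B` are disjoint and the unique path of
`T` from `A` to `B` (i.e. the path meeting `A` only at its first vertex and `B` only
at its last vertex) contains a vertex of `C` (possibly an endpoint). -/
def Between {W : Type} (T : SimpleGraph W) (A B C : Set W) : Prop :=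
  A ∩ B = ∅ ∧ ∃ (a b : W) (p : T.Walk a b), a ∈ A ∧ b ∈ B ∧ p.IsPath ∧
    (∀ x ∈ p.support, x ∈ A → x = a) ∧ (∀ x ∈ p.support, x ∈ B → x = b) ∧
    ∃ x ∈ C, x ∈ p.support

/-- An asteroidal collection of sets in `T`: pairwise disjoint, and no member is
between two other members. -/
def Asteroidal {W ι : Type} (T : SimpleGraph W) (F : ι → Set W) : Prop :=
  (∀ i j, i ≠ j → F i ∩ F j = ∅) ∧
  ∀ i j k, i ≠ j → i ≠ k → j ≠ k → ¬ Between T (F i) (F j) (F k)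

/-- The star `K_{1,n}`: the center `none` is adjacent to the `n` leaves `some i`. -/
def starGraph (n : ℕ) : SimpleGraph (Option (Fin n)) :=
  SimpleGraph.fromRel (fun a _ => a = none)

/-- A Ferrers digraph: the successor sets are linearly ordered by inclusion. -/
def IsFerrers {V : Type} (F : V → V → Prop) : Prop :=
  ∀ u u' : V, {v | F u v} ⊆ {v | F u' v} ∨ {v | F u' v} ⊆ {v | F u v}

/-- The Ferrers dimension `f(D)`: the minimum number of Ferrers digraphs whose
intersection is `E`. -/
noncomputable def ferrersDim {V : Type} (E : V → V → Prop) : ℕ :=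
  sInf {k | ∃ F : Fin k → V → V → Prop,
    (∀ i, IsFerrers (F i)) ∧ (∀ u v, E u v ↔ ∀ i, F i u v)}

/-- `f*(D)`: the minimum number of pairwise edge-disjoint Ferrers digraphs whose
union is the complement of `E` in `V × V`. -/
noncomputable def fstar {V : Type} (E : V → V → Prop) : ℕ :=
  sInf {k | ∃ F : Fin k → V → V → Prop,
    (∀ i, IsFerrers (F i)) ∧
    (∀ i j, i ≠ j → ∀ u v, ¬ (F i u v ∧ F j u v)) ∧
    (∀ u v, ¬ E u v ↔ ∃ i, F i u v)}

/-- The width of the incidence poset `P(D)`: the maximum size of an antichain (under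
inclusion) of predecessor sets of the digraph `E`. -/
noncomputable def incWidth {V : Type} (E : V → V → Prop) : ℕ :=
  sSup {k | ∃ A : Finset (Set V),
    (↑A : Set (Set V)) ⊆ Set.range (fun v => {u | E u v}) ∧
    IsAntichain (· ⊆ ·) (↑A : Set (Set V)) ∧ A.card = k}

/-- The digraph `D_n` with adjacency matrix `J - I`: all pairs of distinct vertices. -/
def DnRel (n : ℕ) (i j : Fin n) : Prop := i ≠ j

/-- The digraph `E_n` with adjacency matrix `[[I, Y], [Yᵀ, 0]]` (vertex `n-1` playing
the role of the last row/column). -/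
def EnRel (n : ℕ) (i j : Fin n) : Prop :=
  (i.val < n - 1 ∧ j.val < n - 1 ∧ i = j) ∨
  (i.val < n - 1 ∧ j.val = n - 1) ∨
  (i.val = n - 1 ∧ j.val < n - 1)

/-- The digraph `C_n`: a directed `n`-cycle plus a loop at each vertex. -/
def CnRel (n : ℕ) (i j : Fin n) : Prop := j = i ∨ j.val = (i.val + 1) % n

/-- The digraph `M_{k,m}` on `Fin k × Fin m`: identity diagonal blocks, all-ones
blocks above the diagonal, all-zeros blocks below. -/
def MkmRel (k m : ℕ) (p q : Fin k × Fin m) : Prop :=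
  p.1 < q.1 ∨ (p.1 = q.1 ∧ p.2 = q.2)

/-- The digraph `F_n` with adjacency matrix `[[I, Y], [Yᵀ, 1]]` (vertex `n-1` playing
the role of the last row/column). -/
def FnRel (n : ℕ) (i j : Fin n) : Prop := i = j ∨ i.val = n - 1 ∨ j.val = n - 1

/-- The digraph `P_n`: a directed path `1 → 2 → ⋯ → n` plus a loop at each vertex. -/
def PnRel (n : ℕ) (i j : Fin n) : Prop := j = i ∨ j.val = i.val + 1

/-!
Lower bound: root the host tree at the sink of the vertex whose predecessor set is the largest.
A source set meeting any sink then contains the root, so it contains the whole path from the root to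
that sink. Hence a sink on the way to another one has the larger predecessor set, and the members of
an antichain sit on different branches, each of which ends in a leaf of its own.

Upper bound: by Dilworth's theorem the predecessor sets split into as many chains as the width. Lay
each chain along one leg of a spider, larger sets closer to the centre; each source set is then the
centre together with an initial segment of every leg.
-/

section Dilworth

variable {α : Type*} [PartialOrder α] {s A : Finset α} {k n : ℕ} {f : α → ℕ}

/-- A partition of `s` into at most `n` chains, encoded as a colouring by the natural numbers
below `n`; the values of `f` outside `s` are irrelevant. -/
structure IsChainColoring (s : Finset α) (n : ℕ) (f : α → ℕ) : Prop where
  lt : ∀ x ∈ s, f x < n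
  le_or_ge : ∀ x ∈ s, ∀ y ∈ s, f x = f y → x ≤ y ∨ y ≤ x

/-- `A` is an antichain of `k` elements inside `s`. -/
structure IsSubantichain (s : Finset α) (k : ℕ) (A : Finset α) : Prop where
  subset : A ⊆ s
  isAntichain : IsAntichain (· ≤ ·) (A : Set α)
  card_eq : A.card = k

theorem exists_isSubantichain_forall_card_le (s : Finset α) :
    ∃ k A, IsSubantichain s k A ∧
      ∀ B ⊆ s, IsAntichain (· ≤ ·) (B : Set α) → B.card ≤ k := by
  classical
  obtain ⟨A, hA, hmax⟩ := Finset.exists_max_image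
    (s.powerset.filter fun A : Finset α => IsAntichain (· ≤ ·) (A : Set α)) Finset.card
    ⟨∅, by simp⟩
  simp only [Finset.mem_filter, Finset.mem_powerset] at hA hmax
  exact ⟨A.card, A, ⟨hA.1, hA.2, rfl⟩, fun B hB hanti => hmax B ⟨hB, hanti⟩⟩

theorem IsChainColoring.injOn_of_isAntichain (hf : IsChainColoring s n f) (hA : A ⊆ s)
    (hanti : IsAntichain (· ≤ ·) (A : Set α)) : Set.InjOn f A := fun x hx y hy hxy =>
  (hf.le_or_ge x (hA hx) y (hA hy) hxy).elim (hanti.eq hx hy) (hanti.eq' hx hy)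

theorem IsSubantichain.exists_mem_color_eq (hA : IsSubantichain s k A)
    (hf : IsChainColoring s k f) {i : ℕ} (hi : i < k) : ∃ z ∈ A, f z = i := by
  have hmaps : ∀ z ∈ A, f z ∈ Finset.range k := fun z hz =>
    Finset.mem_range.2 (hf.lt z (hA.subset hz))
  exact Finset.surjOn_of_injOn_of_card_le f hmaps
    (hf.injOn_of_isAntichain hA.subset hA.isAntichain) (by simp [hA.card_eq])
    (Finset.mem_coe.2 (Finset.mem_range.2 hi))

/-- `x` is the highest of the elements of its colour that lie in some `k`-element antichain
inside `s`. In Galvin's proof of Dilworth's theorem, `f` is a partition of `s` into `k` chains. -/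
structure IsHighest (s : Finset α) (k : ℕ) (f : α → ℕ) (x : α) : Prop where
  exists_mem : ∃ A, IsSubantichain s k A ∧ x ∈ A
  le : ∀ A, IsSubantichain s k A → ∀ z ∈ A, f z = f x → z ≤ x

theorem IsSubantichain.exists_isHighest (hA : IsSubantichain s k A)
    (hf : IsChainColoring s k f) {i : ℕ} (hi : i < k) : ∃ x, IsHighest s k f x ∧ f x = i := by
  classical
  obtain ⟨z₀, hz₀, hfz₀⟩ := hA.exists_mem_color_eq hf hi
  obtain ⟨x, hx, hmax⟩ := (s.filter fun z => f z = i ∧ ∃ B, IsSubantichain s k B ∧ z ∈ B)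
    |>.exists_maximal ⟨z₀, Finset.mem_filter.2 ⟨hA.subset hz₀, hfz₀, A, hA, hz₀⟩⟩
  obtain ⟨hxs, rfl, hxB⟩ := Finset.mem_filter.1 hx
  refine ⟨x, ⟨hxB, fun B hB z hz hzx => ?_⟩, rfl⟩
  rcases hf.le_or_ge z (hB.subset hz) x hxs hzx with hle | hle
  · exact hle
  · exact hmax (Finset.mem_filter.2 ⟨hB.subset hz, hzx, B, hB, hz⟩) hle

theorem IsChainColoring.isAntichain_setOf_isHighest (hf : IsChainColoring s k f) :
    IsAntichain (· ≤ ·) {x | IsHighest s k f x} := by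
  intro x hx y hy hne hxy
  obtain ⟨A, hA, hxA⟩ := hx.exists_mem
  obtain ⟨B, hB, hyB⟩ := hy.exists_mem
  obtain ⟨z, hzB, hzx⟩ := hB.exists_mem_color_eq hf (hf.lt x (hA.subset hxA))
  have hzy : z = y := hB.isAntichain.eq hzB hyB ((hx.le B hB z hzB hzx).trans hxy)
  exact hne (hxy.antisymm (hzy ▸ hx.le B hB z hzB hzx))

theorem IsSubantichain.exists_forall_isHighest (hA : IsSubantichain s k A)
    (hf : IsChainColoring s k f) : ∃ T, IsSubantichain s k T ∧ ∀ x ∈ T, IsHighest s k f x := by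
  classical
  set T := s.filter (IsHighest s k f)
  have hTs : T ⊆ s := Finset.filter_subset _ _
  have hhigh : ∀ x ∈ T, IsHighest s k f x := fun x hx => (Finset.mem_filter.1 hx).2
  have hanti : IsAntichain (· ≤ ·) (T : Set α) := hf.isAntichain_setOf_isHighest.subset hhigh
  have hcolors : T.image f = Finset.range k := by
    ext i
    simp only [Finset.mem_image, Finset.mem_range]
    refine ⟨?_, fun hi => ?_⟩
    · rintro ⟨x, hx, rfl⟩
      exact hf.lt x (hTs hx)
    · obtain ⟨x, hx, hxi⟩ := hA.exists_isHighest hf hi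
      obtain ⟨B, hB, hxB⟩ := hx.exists_mem
      exact ⟨x, Finset.mem_filter.2 ⟨hB.subset hxB, hx⟩, hxi⟩
  refine ⟨T, ⟨hTs, hanti, ?_⟩, hhigh⟩
  rw [← Finset.card_image_of_injOn (hf.injOn_of_isAntichain hTs hanti), hcolors, Finset.card_range]

theorem IsChainColoring.exists_succ_of_sdiff [DecidableEq α] {K : Finset α}
    (hK : IsChain (· ≤ ·) (K : Set α)) (hf : IsChainColoring (s \ K) n f) :
    ∃ g, IsChainColoring s (n + 1) g := by
  refine ⟨fun z => if z ∈ K then n else f z, fun x hx => ?_, fun x hx y hy => ?_⟩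
  · have := hf.lt x
    grind
  · have hx' := hf.lt x
    have hy' := hf.lt y
    have hle := hf.le_or_ge x
    have hKxy : x ∈ K → y ∈ K → x ≤ y ∨ y ≤ x := fun hxK hyK => hK.total hxK hyK
    grind

/-- The chain removed in Galvin's induction: below the highest element `x` it contains every
element of the colour of `x` that lies in a largest antichain. -/
theorem IsHighest.exists_isChain_forall_card_lt [DecidableEq α] {a x : α}
    (hx : IsHighest (s.erase a) k f x) (hf : IsChainColoring (s.erase a) k f) (hxa : x ≤ a)
    (hk : ∀ B ⊆ s.erase a, IsAntichain (· ≤ ·) (B : Set α) → B.card ≤ k) :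
    ∃ K : Finset α, a ∈ K ∧ IsChain (· ≤ ·) (K : Set α) ∧
      ∀ B ⊆ s \ K, IsAntichain (· ≤ ·) (B : Set α) → B.card < k := by
  classical
  set C := (s.erase a).filter fun z => f z = f x ∧ z ≤ x
  refine ⟨insert a C, Finset.mem_insert_self _ _, ?_, fun B hB hanti => ?_⟩
  · rw [Finset.coe_insert]
    refine IsChain.insert (fun y hy z hz _ => ?_) fun z hz _ => Or.inr ?_
    · obtain ⟨hys, hyx, -⟩ := Finset.mem_filter.1 hy
      obtain ⟨hzs, hzx, -⟩ := Finset.mem_filter.1 hz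
      exact hf.le_or_ge y hys z hzs (hyx.trans hzx.symm)
    · exact (Finset.mem_filter.1 hz).2.2.trans hxa
  · have hBs : B ⊆ s.erase a := by grind
    refine (hk B hBs hanti).lt_of_ne fun hcard => ?_
    have hB' : IsSubantichain (s.erase a) k B := ⟨hBs, hanti, hcard⟩
    obtain ⟨A, hA, hxA⟩ := hx.exists_mem
    obtain ⟨z, hz, hzx⟩ := hB'.exists_mem_color_eq hf (hf.lt x (hA.subset hxA))
    have hzC : z ∈ C := Finset.mem_filter.2 ⟨hBs hz, hzx, hx.le B hB' z hz hzx⟩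
    exact (Finset.mem_sdiff.1 (hB hz)).2 (Finset.mem_insert_of_mem hzC)

theorem IsSubantichain.insert_of_maximal [DecidableEq α] {a : α}
    (hA : IsSubantichain (s.erase a) k A) (ha : Maximal (· ∈ s) a) (hnot : ∀ x ∈ A, ¬ x ≤ a) :
    IsSubantichain s (k + 1) (insert a A) where
  subset := Finset.insert_subset ha.prop (hA.subset.trans (Finset.erase_subset _ _))
  isAntichain := by
    rw [Finset.coe_insert]
    refine hA.isAntichain.insert (fun x hx _ => hnot x hx) fun x hx _ hax => ?_
    exact hnot x hx (ha.le_of_ge (Finset.mem_of_mem_erase (hA.subset hx)) hax)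
  card_eq := by
    rw [Finset.card_insert_of_notMem fun ha' => hnot a ha' le_rfl, hA.card_eq]

theorem IsChainColoring.mono (hf : IsChainColoring s k f) (hkn : k ≤ n) : IsChainColoring s n f :=
  ⟨fun x hx => (hf.lt x hx).trans_le hkn, hf.le_or_ge⟩

/-- **Dilworth's theorem**, by Galvin's induction on a maximal element. -/
theorem exists_isChainColoring (s : Finset α) (n : ℕ)
    (h : ∀ A ⊆ s, IsAntichain (· ≤ ·) (A : Set α) → A.card ≤ n) :
    ∃ f : α → ℕ, IsChainColoring s n f := by
  classical
  induction s using Finset.strongInduction generalizing n with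
  | H s ih =>
  rcases s.eq_empty_or_nonempty with rfl | hs
  · exact ⟨fun _ => 0, by simp, by simp⟩
  obtain ⟨a, ha⟩ := s.exists_maximal hs
  obtain ⟨k, A, hA, hk⟩ := exists_isSubantichain_forall_card_le (s.erase a)
  obtain ⟨f, hf⟩ := ih (s.erase a) (Finset.erase_ssubset ha.prop) k hk
  obtain ⟨T, hT, hhigh⟩ := hA.exists_forall_isHighest hf
  by_cases hbelow : ∃ x ∈ T, x ≤ a
  · obtain ⟨x, hxT, hxa⟩ := hbelow
    obtain ⟨K, haK, hK, hlt⟩ := (hhigh x hxT).exists_isChain_forall_card_lt hf hxa hk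
    have hss : s \ K ⊂ s :=
      ⟨Finset.sdiff_subset, fun hsub => (Finset.mem_sdiff.1 (hsub ha.prop)).2 haK⟩
    obtain ⟨g, hg⟩ := ih (s \ K) hss (k - 1) fun B hB hanti => Nat.le_sub_one_of_lt (hlt B hB hanti)
    obtain ⟨c, hc⟩ := hg.exists_succ_of_sdiff hK
    have hkn : k ≤ n := hA.card_eq ▸ h A (hA.subset.trans (Finset.erase_subset _ _)) hA.isAntichain
    have hk0 : 0 < k := (Nat.zero_le _).trans_lt (hf.lt x (hT.subset hxT))
    exact ⟨c, hc.mono (by omega)⟩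
  · push Not at hbelow
    have haT := hT.insert_of_maximal ha hbelow
    rw [← Finset.sdiff_singleton_eq_erase] at hf
    obtain ⟨c, hc⟩ := hf.exists_succ_of_sdiff (by simp)
    exact ⟨c, hc.mono (haT.card_eq ▸ h _ haT.subset haT.isAntichain)⟩

theorem exists_coloring_fin_of_antichain_card_le [Finite α]
    (h : ∀ A : Finset α, IsAntichain (· ≤ ·) (A : Set α) → A.card ≤ n) :
    ∃ f : α → Fin n, ∀ x y, f x = f y → x ≤ y ∨ y ≤ x := by
  have := Fintype.ofFinite α
  obtain ⟨f, hf⟩ := exists_isChainColoring Finset.univ n fun A _ => h A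
  exact ⟨fun x => ⟨f x, hf.lt x (Finset.mem_univ x)⟩, fun x y hxy =>
    hf.le_or_ge x (Finset.mem_univ x) y (Finset.mem_univ y) (congrArg Fin.val hxy)⟩

end Dilworth

section Ancestor

variable {W : Type*} {T : SimpleGraph W} {r x y l : W} {S : Set W}

/-- `x` is an ancestor of `y` in the tree `T` rooted at `r`: it lies on the path from the root to
`y`. Every vertex is an ancestor of itself. -/
def IsAncestor (T : SimpleGraph W) (r x y : W) : Prop :=
  ∃ p : T.Walk r y, p.IsPath ∧ x ∈ p.support

theorem isAncestor_root (hT : T.Connected) (r y : W) : IsAncestor T r r y :=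
  have ⟨p, hp⟩ := hT.exists_isPath r y
  ⟨p, hp, p.start_mem_support⟩

theorem IsAncestor.mem_of_induce_connected (hT : T.IsAcyclic) (hS : (T.induce S).Connected)
    (hr : r ∈ S) (hy : y ∈ S) (hxy : IsAncestor T r x y) : x ∈ S := by
  obtain ⟨p, hp, hxp⟩ := hxy
  obtain ⟨q, hq⟩ := hS.exists_isPath ⟨r, hr⟩ ⟨y, hy⟩
  let incl : T.induce S ↪g T := SimpleGraph.Embedding.induce S
  have hpq : p = q.map incl.toHom :=
    congrArg Subtype.val ((hT.subsingleton_path r y).elim ⟨p, hp⟩ ⟨_, hq.map incl.injective⟩)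
  have hsupp : p.support = q.support.map incl :=
    (congrArg SimpleGraph.Walk.support hpq).trans (q.support_map incl.toHom)
  obtain ⟨z, -, rfl⟩ := List.mem_map.1 (hsupp ▸ hxp)
  exact z.2

theorem IsAncestor.total (hT : T.IsAcyclic) (hx : IsAncestor T r x l) (hy : IsAncestor T r y l) :
    IsAncestor T r x y ∨ IsAncestor T r y x := by
  classical
  obtain ⟨p, hp, hxp⟩ := hx
  obtain ⟨q, hq, hyq⟩ := hy
  obtain rfl : p = q :=
    congrArg Subtype.val ((hT.subsingleton_path r l).elim ⟨p, hp⟩ ⟨q, hq⟩)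
  refine (List.prefix_or_prefix_of_prefix (p.support_takeUntil_prefix_support hxp)
    (p.support_takeUntil_prefix_support hyq)).imp (fun h => ?_) fun h => ?_
  · exact ⟨_, hp.takeUntil hyq, h.subset (SimpleGraph.Walk.end_mem_support _)⟩
  · exact ⟨_, hp.takeUntil hxp, h.subset (SimpleGraph.Walk.end_mem_support _)⟩

end Ancestor

section Leaves

variable {W : Type} {ι : Type*} {T : SimpleGraph W} {r x : W}

theorem notMem_treeLeaves_of_adj_of_adj {y z : W} (hy : T.Adj x y) (hz : T.Adj x z)
    (hyz : y ≠ z) : x ∉ treeLeaves T := fun hx => by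
  obtain ⟨w, hw⟩ := Set.ncard_eq_one.1 hx
  have heq : ∀ v, T.Adj x v → v = w := fun v hv => by simpa [hw] using (T.mem_neighborSet x v).2 hv
  exact hyz ((heq y hy).trans (heq z hz).symm)

theorem exists_mem_treeLeaves_isAncestor [Finite W] (hT : T.IsTree) (hxr : x ≠ r) :
    ∃ l ∈ treeLeaves T, IsAncestor T r x l := by
  have := Fintype.ofFinite W
  let lengths : Set ℕ := {n | ∃ (l : W) (p : T.Walk r l), p.IsPath ∧ x ∈ p.support ∧ p.length = n}
  have hfin : lengths.Finite := (Set.finite_lt_nat (Fintype.card W)).subset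
    fun n ⟨_, _, hp, _, hn⟩ => hn ▸ hp.length_lt
  obtain ⟨p₀, hp₀⟩ := hT.connected.exists_isPath r x
  obtain ⟨-, ⟨l, p, hp, hxp, rfl⟩, hmax⟩ :=
    hfin.exists_maximal ⟨_, x, p₀, hp₀, p₀.end_mem_support, rfl⟩
  have hnil : ¬ p.Nil := fun hnil => by
    rw [SimpleGraph.Walk.nil_iff_support_eq.1 hnil, List.mem_singleton] at hxp
    exact hxr hxp
  have huniq : T.neighborSet l = {p.penultimate} := by
    refine Set.eq_singleton_iff_unique_mem.2 ⟨(p.adj_penultimate hnil).symm, fun y hy => ?_⟩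
    refine hT.isAcyclic.eq_penultimate_of_adj_end hp hy (by_contra fun hyp => ?_)
    have hlonger : p.length + 1 ∈ lengths := ⟨y, p.concat hy, hp.concat hyp hy,
      p.support_subset_support_concat hy hxp, p.length_concat hy⟩
    exact (Nat.lt_succ_self _).not_ge (hmax hlonger (Nat.le_succ _))
  exact ⟨l, by simp [treeLeaves, huniq], p, hp, hxp⟩

theorem ncard_le_ncard_treeLeaves_of_isAntichain [Finite W] (hT : T.IsTree) {g : ι → W}
    {s : Set ι} (hs : s.Nontrivial) (hanti : ∀ i ∈ s, ∀ j ∈ s, IsAncestor T r (g i) (g j) → i = j) :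
    s.ncard ≤ (treeLeaves T).ncard := by
  have hroot : ∀ i ∈ s, g i ≠ r := fun i hi hir => by
    obtain ⟨j, hj, hji⟩ := hs.exists_ne i
    exact hji.symm (hanti i hi j hj (hir ▸ isAncestor_root hT.connected r (g j)))
  have hleaf : ∀ i ∈ s, ∃ l ∈ treeLeaves T, IsAncestor T r (g i) l := fun i hi =>
    exists_mem_treeLeaves_isAncestor hT (hroot i hi)
  have : Nonempty W := ⟨r⟩
  choose! leaf hleaf hgleaf using hleaf
  refine Set.ncard_le_ncard_of_injOn leaf hleaf (fun i hi j hj hij => ?_)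
  refine ((hgleaf i hi).total hT.isAcyclic (hij ▸ hgleaf j hj)).elim (hanti i hi j hj) fun h => ?_
  exact (hanti j hj i hi h).symm

end Leaves

section ParentGraph

variable {W : Type*} {par : W → W} {root : W}

/-- The graph joining every vertex to its parent; vertices that are their own parent give no
edge. -/
def parentGraph (par : W → W) : SimpleGraph W :=
  SimpleGraph.fromRel fun x y => par x = y

theorem parentGraph_adj_parent {x : W} (hx : par x ≠ x) : (parentGraph par).Adj x (par x) :=
  ⟨hx.symm, Or.inl rfl⟩

theorem parentGraph_induce_connected (hreach : ∀ x, ∃ n, par^[n] x = root) {S : Set W}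
    (hroot : root ∈ S) (hS : ∀ x ∈ S, x ≠ root → par x ∈ S) :
    ((parentGraph par).induce S).Connected := by
  have reachable_root : ∀ n, ∀ x : S, par^[n] x = root →
      ((parentGraph par).induce S).Reachable ⟨root, hroot⟩ x := by
    intro n
    induction n with
    | zero => rintro ⟨x, hx⟩ rfl; rfl
    | succ n ih =>
      rintro ⟨x, hx⟩ hn
      by_cases hfix : par x = x
      · exact ih ⟨x, hx⟩ (by rwa [Function.iterate_succ_apply, hfix] at hn)
      by_cases hxr : x = root
      · subst hxr; rfl
      have hadj : ((parentGraph par).induce S).Adj ⟨x, hx⟩ ⟨par x, hS x hx hxr⟩ :=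
        parentGraph_adj_parent hfix
      exact (ih ⟨par x, hS x hx hxr⟩ hn).trans hadj.symm.reachable
  exact (SimpleGraph.connected_iff_exists_forall_reachable _).2
    ⟨⟨root, hroot⟩, fun x => (hreach x).elim fun n hn => reachable_root n x hn⟩

theorem parentGraph_edgeSet_subset (hroot : par root = root) :
    (parentGraph par).edgeSet ⊆ (fun x => s(x, par x)) '' {root}ᶜ := by
  refine Sym2.ind fun x y (hxy : (parentGraph par).Adj x y) => ?_
  obtain ⟨hne, rfl | rfl⟩ := hxy
  · exact ⟨x, by rintro rfl; exact hne hroot.symm, rfl⟩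
  · exact ⟨y, by rintro rfl; exact hne hroot, Sym2.eq_swap⟩

theorem parentGraph_isTree [Finite W] (hreach : ∀ x, ∃ n, par^[n] x = root)
    (hroot : par root = root) : (parentGraph par).IsTree := by
  have hconn : (parentGraph par).Connected :=
    (SimpleGraph.induceUnivIso _).connected_iff.1 <|
      parentGraph_induce_connected hreach (Set.mem_univ root) fun _ _ _ => Set.mem_univ _
  refine SimpleGraph.isTree_iff_connected_and_card.2
    ⟨hconn, le_antisymm ?_ hconn.card_vert_le_card_edgeSet_add_one⟩
  calc Nat.card (parentGraph par).edgeSet + 1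
      ≤ ({root}ᶜ : Set W).ncard + 1 := by
        gcongr
        exact (Set.ncard_le_ncard (parentGraph_edgeSet_subset hroot)).trans Set.ncard_image_le
    _ = Nat.card W := by
        rw [← Set.ncard_add_ncard_compl ({root} : Set W), Set.ncard_singleton, add_comm]

end ParentGraph

section Spider

variable {ι : Type} {n : ℕ}

/-- The parent function of the spider with a leg of `n` vertices for each `i : ι`: the centre is
`none`, and `some (i, j)` is the vertex of leg `i` at distance `j + 1` from the centre. -/
def spiderParent : Option (ι × Fin n) → Option (ι × Fin n)
  | none => none
  | some (_, ⟨0, _⟩) => none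
  | some (i, ⟨j + 1, h⟩) => some (i, ⟨j, Nat.lt_of_succ_lt h⟩)

/-- The spider with centre `none` and a leg of `n` vertices for each `i : ι`. -/
def spider (ι : Type) (n : ℕ) : SimpleGraph (Option (ι × Fin n)) :=
  parentGraph spiderParent

theorem exists_iterate_spiderParent_eq_none :
    ∀ x : Option (ι × Fin n), ∃ m, spiderParent^[m] x = none
  | none => ⟨0, rfl⟩
  | some (i, ⟨j, hj⟩) => by
    refine ⟨j + 1, ?_⟩
    induction j with
    | zero => rfl
    | succ j ih => exact ih (Nat.lt_of_succ_lt hj)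

theorem spider_isTree [Finite ι] : (spider ι n).IsTree :=
  parentGraph_isTree exists_iterate_spiderParent_eq_none rfl

theorem spider_adj_none_some_zero (i : ι) : (spider ι (n + 1)).Adj none (some (i, 0)) :=
  ⟨by simp, Or.inr rfl⟩

theorem spider_adj_some_succ (i : ι) {j : ℕ} (hj : j + 1 < n) :
    (spider ι n).Adj (some (i, ⟨j, Nat.lt_of_succ_lt hj⟩)) (some (i, ⟨j + 1, hj⟩)) :=
  ⟨by simp, Or.inr rfl⟩

theorem treeLeaves_spider_subset [Nontrivial ι] :
    treeLeaves (spider ι (n + 1)) ⊆ Set.range fun i => some (i, Fin.last n) := by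
  rintro (_ | ⟨i, j, hj⟩) hx
  · obtain ⟨a, b, hab⟩ := exists_pair_ne ι
    exact absurd hx (notMem_treeLeaves_of_adj_of_adj (spider_adj_none_some_zero a)
      (spider_adj_none_some_zero b) (by simpa))
  obtain rfl | hjn := Nat.eq_or_lt_of_le (Nat.le_of_lt_succ hj)
  · exact ⟨i, rfl⟩
  have hchild := spider_adj_some_succ i (Nat.succ_lt_succ hjn)
  refine absurd hx ?_
  cases j with
  | zero =>
    exact notMem_treeLeaves_of_adj_of_adj (spider_adj_none_some_zero i).symm hchild (by simp)
  | succ j =>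
    exact notMem_treeLeaves_of_adj_of_adj (spider_adj_some_succ i hj).symm hchild (by simp; omega)

theorem ncard_treeLeaves_spider_le [Finite ι] [Nontrivial ι] :
    (treeLeaves (spider ι (n + 1))).ncard ≤ Nat.card ι :=
  calc (treeLeaves (spider ι (n + 1))).ncard
      ≤ (Set.range fun i : ι => some (i, Fin.last n)).ncard :=
        Set.ncard_le_ncard treeLeaves_spider_subset
    _ ≤ Nat.card ι := by
        rw [← Set.image_univ, ← Set.ncard_univ]
        exact Set.ncard_image_le

/-- The centre of the spider together with, on each leg `i`, the positions in `L i`. -/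
def spiderSegments (L : ι → Set (Fin n)) : Set (Option (ι × Fin n)) :=
  {x | ∀ i j, x = some (i, j) → j ∈ L i}

theorem spider_induce_spiderSegments_connected {L : ι → Set (Fin n)} (hL : ∀ i, IsLowerSet (L i)) :
    ((spider ι n).induce (spiderSegments L)).Connected := by
  refine parentGraph_induce_connected (root := none) exists_iterate_spiderParent_eq_none
    (by simp [spiderSegments]) ?_
  rintro (_ | ⟨i, _ | j, hj⟩) hx hne
  · exact absurd rfl hne
  · rintro _ _ ⟨⟩
  · rintro _ _ ⟨⟩
    exact hL i (Fin.mk_le_mk.2 (Nat.le_succ j)) (hx i _ rfl)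

end Spider

section IncidencePoset

variable {V : Type} {E : V → V → Prop}

/-- The predecessor set `N⁻(v)`; the incidence poset of `E` is `Set.range (predSet E)`. -/
def predSet (E : V → V → Prop) (v : V) : Set V :=
  {u | E u v}

theorem bddAbove_card_antichain (hfin : (Set.range (predSet E)).Finite) :
    BddAbove {k | ∃ A : Finset (Set V), (A : Set (Set V)) ⊆ Set.range (predSet E) ∧
      IsAntichain (· ⊆ ·) (A : Set (Set V)) ∧ A.card = k} := by
  refine ⟨(Set.range (predSet E)).ncard, ?_⟩
  rintro _ ⟨A, hA, -, rfl⟩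
  exact Set.ncard_coe_finset A ▸ Set.ncard_le_ncard hA hfin

theorem card_le_incWidth (hfin : (Set.range (predSet E)).Finite) {A : Finset (Set V)}
    (hA : (A : Set (Set V)) ⊆ Set.range (predSet E))
    (hanti : IsAntichain (· ⊆ ·) (A : Set (Set V))) : A.card ≤ incWidth E :=
  le_csSup (bddAbove_card_antichain hfin) ⟨A, hA, hanti, rfl⟩

theorem exists_isAntichain_card_eq_incWidth (hfin : (Set.range (predSet E)).Finite) :
    ∃ A : Finset (Set V), (A : Set (Set V)) ⊆ Set.range (predSet E) ∧
      IsAntichain (· ⊆ ·) (A : Set (Set V)) ∧ A.card = incWidth E := by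
  refine Nat.sSup_mem ?_ (bddAbove_card_antichain hfin)
  exact ⟨0, ∅, by simp, by simp, rfl⟩

theorem exists_chain_coloring_predSet (hfin : (Set.range (predSet E)).Finite) :
    ∃ f : V → Fin (incWidth E), ∀ v v', f v = f v' →
      predSet E v ⊆ predSet E v' ∨ predSet E v' ⊆ predSet E v := by
  have := hfin.to_subtype
  have hwidth (A : Finset (Set.range (predSet E)))
      (hanti : IsAntichain (· ≤ ·) (A : Set (Set.range (predSet E)))) :
      A.card ≤ incWidth E := by
    rw [← Finset.card_map (Function.Embedding.subtype _)]
    refine card_le_incWidth hfin (by simp) ?_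
    rw [Finset.coe_map]
    exact hanti.image _ fun _ _ h => h
  obtain ⟨f, hf⟩ := exists_coloring_fin_of_antichain_card_le hwidth
  exact ⟨fun v => f ⟨predSet E v, v, rfl⟩, fun v v' => hf _ _⟩

end IncidencePoset

section CatchRepresentation

variable {V W : Type} {E : V → V → Prop} {T : SimpleGraph W} {R : SubtreeRep E T}

/-- A catch representation: every sink set is a single vertex. -/
def SubtreeRep.IsCatch (R : SubtreeRep E T) : Prop :=
  ∀ v, ∃ x, R.snk v = {x}

theorem SubtreeRep.IsCatch.catchLeafage_le [Finite W] (hR : R.IsCatch) (hT : T.IsTree) :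
    catchLeafage E ≤ (treeLeaves T).ncard :=
  Nat.sInf_le ⟨W, Fintype.ofFinite W, T, R, hT, hR, rfl⟩

theorem SubtreeRep.IsCatch.le_catchLeafage [Finite W] (hR : R.IsCatch) (hT : T.IsTree) {k : ℕ}
    (hk : ∀ (W' : Type) [Finite W'] (T' : SimpleGraph W') (R' : SubtreeRep E T'),
      T'.IsTree → R'.IsCatch → k ≤ (treeLeaves T').ncard) : k ≤ catchLeafage E := by
  refine le_csInf ⟨_, W, Fintype.ofFinite W, T, R, hT, hR, rfl⟩ ?_
  rintro _ ⟨W', _, T', R', hT', hR', rfl⟩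
  exact hk W' T' R' hT' hR'

theorem SubtreeRep.IsCatch.exists_pos (hR : R.IsCatch) :
    ∃ pos : V → W, ∀ u v, E u v ↔ pos v ∈ R.src u := by
  choose pos hpos using hR
  exact ⟨pos, fun u v => by rw [R.rep, hpos, Set.inter_singleton_nonempty]⟩

end CatchRepresentation

section UpperBound

variable {V ι : Type} {E : V → V → Prop} {n : ℕ}

/-- The catch representation in a spider that places the sink of `v` on leg `f v` at position
`pos v`. Each source set reaches along each leg just as far as its farthest successor, so the
representation is correct when the predecessor sets decrease along each leg. -/
def spiderRep (f : V → ι) (pos : V → Fin n)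
    (h : ∀ v v', f v = f v' → pos v ≤ pos v' → predSet E v' ⊆ predSet E v) :
    SubtreeRep E (spider ι n) where
  src u := spiderSegments fun i => {j | ∃ v, E u v ∧ f v = i ∧ j ≤ pos v}
  snk v := {some (f v, pos v)}
  src_connected _ := spider_induce_spiderSegments_connected
    fun _ _ _ hle ⟨v, huv, hv, hj⟩ => ⟨v, huv, hv, hle.trans hj⟩
  snk_connected _ := SimpleGraph.Connected.of_subsingleton
  rep u v := by
    rw [Set.inter_singleton_nonempty]
    constructor
    · rintro huv _ _ ⟨⟩
      exact ⟨v, huv, rfl, le_rfl⟩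
    · intro hmem
      obtain ⟨v', huv', hf, hpos⟩ := hmem _ _ rfl
      exact h v v' hf.symm hpos huv'

theorem exists_strictAnti_fin (α : Type*) [Finite α] [PartialOrder α] :
    ∃ pos : α → Fin (Nat.card α + 1), StrictAnti pos :=
  ⟨fun x => ⟨(Set.Ioi x).ncard, Nat.lt_succ_of_le (Set.ncard_le_card _)⟩, fun _ _ hxy =>
    Fin.mk_lt_mk.2 (Set.ncard_lt_ncard (Set.Ioi_ssubset_Ioi hxy))⟩

theorem exists_isCatch_ncard_treeLeaves_le (hfin : (Set.range (predSet E)).Finite)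
    (hw : 2 ≤ incWidth E) :
    ∃ (W : Type) (_ : Finite W) (T : SimpleGraph W) (R : SubtreeRep E T),
      T.IsTree ∧ R.IsCatch ∧ (treeLeaves T).ncard ≤ incWidth E := by
  have := hfin.to_subtype
  have := Fin.nontrivial_iff_two_le.2 hw
  obtain ⟨f, hf⟩ := exists_chain_coloring_predSet hfin
  obtain ⟨pos, hpos⟩ := exists_strictAnti_fin (Set.range (predSet E))
  let R := spiderRep (E := E) f (fun v => pos ⟨predSet E v, v, rfl⟩) fun v v' hvv' hle => by
    refine (hf v v' hvv').elim (fun hsub => ?_) id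
    by_contra hnot
    exact hle.not_gt (hpos (Subtype.mk_lt_mk.2 ⟨hsub, hnot⟩))
  exact ⟨_, inferInstance, _, R, spider_isTree, fun v => ⟨_, rfl⟩,
    ncard_treeLeaves_spider_le.trans_eq (Nat.card_fin _)⟩

end UpperBound

section LowerBound

variable {V W : Type} {E : V → V → Prop} {T : SimpleGraph W} {R : SubtreeRep E T} {v₀ : V}

theorem predSet_subset_of_isAncestor (hT : T.IsAcyclic) {pos : V → W}
    (hpos : ∀ u v, E u v ↔ pos v ∈ R.src u) (hv₀ : ∀ v, predSet E v ⊆ predSet E v₀) {v v' : V}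
    (h : IsAncestor T (pos v₀) (pos v) (pos v')) : predSet E v' ⊆ predSet E v := fun u hu =>
  (hpos u v).2 <| h.mem_of_induce_connected hT (R.src_connected u)
    ((hpos u v₀).1 (hv₀ v' hu)) ((hpos u v').1 hu)

theorem SubtreeRep.IsCatch.card_le_ncard_treeLeaves [Finite W] (hR : R.IsCatch) (hT : T.IsTree)
    (hv₀ : ∀ v, predSet E v ⊆ predSet E v₀) {A : Finset (Set V)}
    (hA : (A : Set (Set V)) ⊆ Set.range (predSet E))
    (hanti : IsAntichain (· ⊆ ·) (A : Set (Set V))) (hcard : 2 ≤ A.card) :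
    A.card ≤ (treeLeaves T).ncard := by
  obtain ⟨pos, hpos⟩ := hR.exists_pos
  have : Nonempty V := ⟨v₀⟩
  have hrep : ∀ S ∈ A, ∃ v, predSet E v = S := fun S hS => hA hS
  choose! rep hrep using hrep
  rw [← Set.ncard_coe_finset]
  refine ncard_le_ncard_treeLeaves_of_isAntichain (r := pos v₀) (g := fun S => pos (rep S)) hT
    (Finset.one_lt_card_iff_nontrivial.1 hcard) fun S hS S' hS' hanc => ?_
  have hsub := predSet_subset_of_isAncestor hT.isAcyclic hpos hv₀ hanc
  rw [hrep S hS, hrep S' hS'] at hsub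
  exact hanti.eq' hS hS' hsub

end LowerBound

theorem stmt_16_general {V : Type} (E : V → V → Prop)
    (hfin : (Set.range fun v => {u | E u v}).Finite)
    (hmax : ∃ v₀ : V, ∀ v : V, {u | E u v} ⊆ {u | E u v₀})
    (hw : 2 ≤ incWidth E) :
    catchLeafage E = incWidth E := by
  obtain ⟨v₀, hv₀⟩ := hmax
  obtain ⟨A, hA, hanti, hcard⟩ := exists_isAntichain_card_eq_incWidth hfin
  obtain ⟨W, _, T, R, hT, hR, hle⟩ := exists_isCatch_ncard_treeLeaves_le hfin hw
  refine le_antisymm ((hR.catchLeafage_le hT).trans hle) (hR.le_catchLeafage hT ?_)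
  intro W' _ T' R' hT' hR'
  rw [← hcard] at hw ⊢
  exact hR'.card_le_ncard_treeLeaves hT' hv₀ hA hanti hw

/-- If the incidence poset `P(D)` has a unique maximal element (a
predecessor set containing all other predecessor sets) and `w(P(D)) ≥ 2`, then
`l*(D) = w(P(D))`. -/
theorem stmt_16 {V : Type} [Fintype V] (E : V → V → Prop)
    (hmax : ∃ v₀ : V, ∀ v : V, {u | E u v} ⊆ {u | E u v₀})
    (hw : 2 ≤ incWidth E) :
    catchLeafage E = incWidth E :=
  stmt_16_general E (Set.toFinite _) hmax hw
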